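/- Let ρ : G → GL₃(ℂ) be an irreducible 3-dimensional representation of a finite group whose projective image in PGL₃(ℂ) is isomorphic to PSL₂(𝔽₇). Then Ad(ρ), the 8-dimensional conjugation representation on trace-zero 3×3 matrices, is irreducible. -/

import Mathlib

open Matrix

section MatDefs

variable {G : Type*} [Group G] {n : ℕ}

/-- Irreducibility of a matrix representation `ρ : G →* GLₙ(ℂ)`. -/
def MatIrreducible (ρ : G →* GL (Fin n) ℂ) : Prop :=
  ∀ U : Submodule ℂ (Fin n → ℂ),
    (∀ g : G, ∀ v ∈ U, (ρ g : Matrix (Fin n) (Fin n) ℂ).mulVec v ∈ U) → U = ⊥ ∨ U = ⊤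

/-- Irreducibility of the adjoint `Ad ρ` of a matrix representation: the conjugation action
of `G` on the space of trace-zero `n × n` matrices is irreducible. -/
def MatAdIrreducible (ρ : G →* GL (Fin n) ℂ) : Prop :=
  LinearMap.ker (Matrix.traceLinearMap (Fin n) ℂ ℂ) ≠ ⊥ ∧
  ∀ U ≤ LinearMap.ker (Matrix.traceLinearMap (Fin n) ℂ ℂ),
    (∀ g : G, ∀ M ∈ U,
      (ρ g : Matrix (Fin n) (Fin n) ℂ) * M * ((ρ g)⁻¹ : GL (Fin n) ℂ) ∈ U) →
    U = ⊥ ∨ U = LinearMap.ker (Matrix.traceLinearMap (Fin n) ℂ ℂ)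

/-- The image of a matrix representation in `PGLₙ(ℂ)`. -/
def projImage (ρ : G →* GL (Fin n) ℂ) : Subgroup (GL (Fin n) ℂ ⧸ Subgroup.center (GL (Fin n) ℂ)) :=
  ((QuotientGroup.mk' (Subgroup.center (GL (Fin n) ℂ))).comp ρ).range

end MatDefs


/-! core -/
lemma sum_root {ζ : ℂ} (hζ : IsPrimitiveRoot ζ 7) (n : ℕ) :
    ∑ k ∈ Finset.range 7, ζ ^ (n * k) = if 7 ∣ n then 7 else 0 := by
  simp_rw [pow_mul]
  split_ifs with h
  · rw [(hζ.pow_eq_one_iff_dvd n).2 h]; simp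
  · have h1 : ζ ^ n ≠ 1 := fun h' => h ((hζ.pow_eq_one_iff_dvd n).1 h')
    have h2 := mul_geom_sum (ζ ^ n) 7
    rw [← pow_mul, mul_comm n 7, pow_mul, hζ.pow_eq_one, one_pow, sub_self] at h2
    exact (mul_eq_zero.1 h2).resolve_left (sub_ne_zero.2 h1)

def expo : Fin 3 → ℕ := ![1, 4, 2]

lemma expo_dvd : ∀ i j p q : Fin 3, i ≠ j →
    (7 ∣ (6 * expo i + expo j + expo p + 6 * expo q) ↔ (i = p ∧ j = q)) := by decide

noncomputable def scaleMat (ζ : ℂ) (k : ℕ) (M : Matrix (Fin 3) (Fin 3) ℂ) : Matrix (Fin 3) (Fin 3) ℂ :=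
  Matrix.of fun p q => ζ ^ ((expo p + 6 * expo q) * k) * M p q

noncomputable def shiftMat (c : Fin 3 → ℂ) (M : Matrix (Fin 3) (Fin 3) ℂ) : Matrix (Fin 3) (Fin 3) ℂ :=
  Matrix.of fun p q => c (p - 1) / c (q - 1) * M (p - 1) (q - 1)

lemma comp_mem {ζ : ℂ} (hζ : IsPrimitiveRoot ζ 7) (U : Submodule ℂ (Matrix (Fin 3) (Fin 3) ℂ))
    (hU : ∀ M ∈ U, scaleMat ζ 1 M ∈ U) (M : Matrix (Fin 3) (Fin 3) ℂ) (hM : M ∈ U)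
    (i j : Fin 3) (hij : i ≠ j) (h : M i j ≠ 0) : Matrix.single i j (1 : ℂ) ∈ U := by
  have hk : ∀ k, scaleMat ζ k M ∈ U := by
    intro k
    induction k with
    | zero => convert hM; ext; simp [scaleMat]
    | succ k ih =>
      convert hU _ ih using 1
      ext p q
      simp [scaleMat]; ring
  have hs : ∑ k ∈ Finset.range 7, ζ ^ ((6 * expo i + expo j) * k) • scaleMat ζ k M ∈ U :=
    U.sum_mem fun k _ => U.smul_mem _ (hk k)
  have he : ∑ k ∈ Finset.range 7, ζ ^ ((6 * expo i + expo j) * k) • scaleMat ζ k M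
      = (7 * M i j) • Matrix.single i j (1 : ℂ) := by
    ext p q
    have : ∀ k, ζ ^ ((6 * expo i + expo j) * k) * (ζ ^ ((expo p + 6 * expo q) * k) * M p q)
      = ζ ^ ((6 * expo i + expo j + expo p + 6 * expo q) * k) * M p q := by
      intro k; ring
    simp only [Matrix.sum_apply, Matrix.smul_apply, scaleMat, Matrix.of_apply, smul_eq_mul, this]
    rw [← Finset.sum_mul, sum_root hζ]
    have hd : 7 ∣ (6 * expo i + expo j + expo p + 6 * expo q) ↔ (i = p ∧ j = q) := by
      exact expo_dvd i j p q hij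
    rw [Matrix.single_apply]
    simp only [hd]
    split_ifs with h'
    · rw [h'.1, h'.2]; ring
    · ring
  rw [he] at hs
  have h7 : (7 * M i j) ≠ 0 := by simpa using h
  have := U.smul_mem (7 * M i j)⁻¹ hs
  rwa [smul_smul, inv_mul_cancel₀ h7, one_smul] at this

lemma shift_single (U : Submodule ℂ (Matrix (Fin 3) (Fin 3) ℂ)) (c : Fin 3 → ℂ)
    (hc : ∀ i, c i ≠ 0) (hU : ∀ M ∈ U, shiftMat c M ∈ U) (i j : Fin 3)
    (h : Matrix.single i j (1 : ℂ) ∈ U) : Matrix.single (i + 1) (j + 1) (1 : ℂ) ∈ U := by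
  have := U.smul_mem (c j / c i) (hU _ h)
  convert this using 1
  ext p q
  have h1 : ∀ i p : Fin 3, i + 1 = p ↔ i = p - 1 := by decide
  simp only [Matrix.single_apply, Matrix.smul_apply, shiftMat, Matrix.of_apply, smul_eq_mul, h1]
  split_ifs with h'
  · rw [← h'.1, ← h'.2]
    have := hc i
    have := hc j
    field_simp
  · simp

lemma shift_single_all (U : Submodule ℂ (Matrix (Fin 3) (Fin 3) ℂ)) (c : Fin 3 → ℂ)
    (hc : ∀ i, c i ≠ 0) (hU : ∀ M ∈ U, shiftMat c M ∈ U) (i j : Fin 3)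
    (h : Matrix.single i j (1 : ℂ) ∈ U) (k : Fin 3) :
    Matrix.single (i + k) (j + k) (1 : ℂ) ∈ U := by
  have h1 := shift_single U c hc hU _ _ h
  have h2 := shift_single U c hc hU _ _ h1
  fin_cases k
  · simpa using h
  · exact h1
  · simpa [add_assoc] using h2

/-- an invariant subspace consisting of diagonal matrices vanishes -/
lemma diag_case {G : Type*} [Group G] (σ : G →* GL (Fin 3) ℂ) (d s : G) (c : Fin 3 → ℂ)
    (hc : ∀ i, c i ≠ 0)
    (hdd : ∀ p q, p ≠ q → (σ d : Matrix (Fin 3) (Fin 3) ℂ) p q = 0)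
    (hs : ¬ Commute (σ (s * d * s⁻¹)) (σ d))
    (U : Submodule ℂ (Matrix (Fin 3) (Fin 3) ℂ))
    (hG : ∀ g : G, ∀ M ∈ U,
      (σ g : Matrix (Fin 3) (Fin 3) ℂ) * M * ((σ g)⁻¹ : GL (Fin 3) ℂ) ∈ U)
    (hU : ∀ M ∈ U, shiftMat c M ∈ U)
    (htr : ∀ M ∈ U, M.trace = 0)
    (hdiag : ∀ M ∈ U, ∀ p q, p ≠ q → M p q = 0) : U = ⊥ := by
  rw [Submodule.eq_bot_iff]
  by_contra! hne
  obtain ⟨X, hX, hX0⟩ := hne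
  have hcomm : ∀ A B : Matrix (Fin 3) (Fin 3) ℂ, (∀ p q, p ≠ q → A p q = 0) →
      (∀ p q, p ≠ q → B p q = 0) → A * B = B * A := by
    intro A B hA hB
    have h1 : A = Matrix.diagonal fun i => A i i := by
      ext p q
      by_cases h : p = q
      · subst h; simp
      · simp [h, hA]
    have h2 : B = Matrix.diagonal fun i => B i i := by
      ext p q
      by_cases h : p = q
      · subst h; simp
      · simp [h, hB]
    rw [h1, h2, Matrix.diagonal_mul_diagonal, Matrix.diagonal_mul_diagonal]
    simp_rw [mul_comm]
  -- some shift separates any two indices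
  have hsh : ∀ M ∈ U, ∀ k : Fin 3, ∃ N ∈ U, ∀ p, N p p = M (p - k) (p - k) := by
    have h1 : ∀ M ∈ U, ∃ N ∈ U, ∀ p, N p p = M (p - 1) (p - 1) := by
      intro M hM
      refine ⟨_, hU M hM, fun p => ?_⟩
      simp [shiftMat, div_self (hc _)]
    intro M hM k
    fin_cases k
    · exact ⟨M, hM, by simp⟩
    · exact h1 M hM
    · obtain ⟨N, hN, hN'⟩ := h1 M hM
      obtain ⟨N', hN1, hN2⟩ := h1 N hN
      refine ⟨N', hN1, fun p => ?_⟩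
      rw [hN2, hN', sub_sub]
      rfl
  have hsep0 : ∃ i : Fin 3, X i i ≠ X (i + 1) (i + 1) := by
    by_contra! hh
    have h0 := hh 0
    have h1 := hh 1
    have ht := htr X hX
    simp only [Matrix.trace, Fin.sum_univ_three, Matrix.diag_apply] at ht
    simp only [zero_add] at h0
    have e : (1 : Fin 3) + 1 = 2 := rfl
    rw [e] at h1
    have hx : X 0 0 = 0 := by linear_combination (ht + 2 * h0 + h1) / 3
    apply hX0
    ext p q
    by_cases h : p = q
    · subst h
      fin_cases p
      · exact hx
      · simp [← h0, hx]
      · simp [← h1, ← h0, hx]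
    · simp [hdiag X hX p q h]
  obtain ⟨i, hi⟩ := hsep0
  have hsep : ∀ p q : Fin 3, p ≠ q → ∃ N ∈ U, N p p ≠ N q q := by
    intro p q hpq
    have hk : ∃ k : Fin 3, (p - k = i ∧ q - k = i + 1) ∨ (p - k = i + 1 ∧ q - k = i) := by
      clear hi
      revert i p q; decide
    obtain ⟨k, hk⟩ := hk
    obtain ⟨N, hN, hN'⟩ := hsh X hX k
    refine ⟨N, hN, ?_⟩
    rw [hN', hN']
    rcases hk with ⟨h1, h2⟩ | ⟨h1, h2⟩
    · rw [h1, h2]; exact hi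
    · rw [h1, h2]; exact hi.symm
  -- `σ (s d s⁻¹)` commutes with `U`
  have hcU : ∀ Y ∈ U, (σ (s * d * s⁻¹) : Matrix (Fin 3) (Fin 3) ℂ) * Y
      = Y * (σ (s * d * s⁻¹) : Matrix (Fin 3) (Fin 3) ℂ) := by
    intro Y hY
    have h1 := hG s⁻¹ Y hY
    have h2 := hcomm _ _ hdd (hdiag _ h1)
    have hss : (σ s : Matrix (Fin 3) (Fin 3) ℂ) * (σ s⁻¹ : GL (Fin 3) ℂ) = 1 := by
      rw [← Units.val_mul, ← map_mul]; simp
    have e : ((σ s⁻¹)⁻¹ : GL (Fin 3) ℂ) = σ s := by simp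
    rw [e] at h2
    simp only [map_mul, Units.val_mul]
    generalize (σ s : Matrix (Fin 3) (Fin 3) ℂ) = S at *
    generalize (σ s⁻¹ : Matrix (Fin 3) (Fin 3) ℂ) = S' at *
    generalize (σ d : Matrix (Fin 3) (Fin 3) ℂ) = D at *
    calc S * D * S' * Y = S * D * S' * Y * (S * S') := by rw [hss, mul_one]
      _ = S * (D * (S' * Y * S)) * S' := by noncomm_ring
      _ = (S * S') * Y * (S * D * S') := by rw [h2]; noncomm_ring
      _ = _ := by rw [hss, one_mul]
  apply hs
  apply Units.ext
  refine hcomm _ _ ?_ hdd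
  intro p q hpq
  obtain ⟨N, hN, hN'⟩ := hsep p q hpq
  have h1 := congrFun (congrFun (hcU N hN) p) q
  have hNd : N = Matrix.diagonal fun i => N i i := by
    ext p q
    by_cases h : p = q
    · subst h; simp
    · simp [h, hdiag N hN]
  rw [hNd, Matrix.mul_diagonal, Matrix.diagonal_mul] at h1
  have h2 : (N p p - N q q) * (σ (s * d * s⁻¹) : Matrix (Fin 3) (Fin 3) ℂ) p q = 0 := by
    linear_combination -h1
  exact (mul_eq_zero.1 h2).resolve_left (sub_ne_zero.2 hN')

lemma core {G : Type*} [Group G] (σ : G →* GL (Fin 3) ℂ) (d t s : G) (c : Fin 3 → ℂ)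
    (hc : ∀ i, c i ≠ 0) {ζ : ℂ} (hζ : IsPrimitiveRoot ζ 7)
    (hdd : ∀ p q, p ≠ q → (σ d : Matrix (Fin 3) (Fin 3) ℂ) p q = 0)
    (hd : ∀ M : Matrix (Fin 3) (Fin 3) ℂ, (σ d : Matrix (Fin 3) (Fin 3) ℂ) * M *
      ((σ d)⁻¹ : GL (Fin 3) ℂ) = scaleMat ζ 1 M)
    (ht : ∀ M : Matrix (Fin 3) (Fin 3) ℂ, (σ t : Matrix (Fin 3) (Fin 3) ℂ) * M *
      ((σ t)⁻¹ : GL (Fin 3) ℂ) = shiftMat c M)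
    (hs : ¬ Commute (σ (s * d * s⁻¹)) (σ d)) :
    MatAdIrreducible σ := by
  -- every nonzero invariant subspace contains an off-diagonal matrix unit
  have key : ∀ U ≤ LinearMap.ker (Matrix.traceLinearMap (Fin 3) ℂ ℂ),
      (∀ g : G, ∀ M ∈ U,
      (σ g : Matrix (Fin 3) (Fin 3) ℂ) * M * ((σ g)⁻¹ : GL (Fin 3) ℂ) ∈ U) → U ≠ ⊥ →
      ((∀ k : Fin 3, Matrix.single k (k + 1) (1 : ℂ) ∈ U) ∨
        (∀ k : Fin 3, Matrix.single (k + 1) k (1 : ℂ) ∈ U)) := by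
    intro U hUtr hUG hU0
    have hT : ∀ M ∈ U, shiftMat c M ∈ U := fun M hM => ht M ▸ hUG t M hM
    have hD : ∀ M ∈ U, scaleMat ζ 1 M ∈ U := fun M hM => hd M ▸ hUG d M hM
    have hnd : ¬ ∀ M ∈ U, ∀ p q, p ≠ q → M p q = 0 := fun h =>
      hU0 (diag_case σ d s c hc hdd hs U hUG hT (fun M hM => by simpa using hUtr hM) h)
    push Not at hnd
    obtain ⟨M, hM, p, q, hpq, h⟩ := hnd
    have h1 := shift_single_all U c hc hT p q (comp_mem hζ U hD M hM p q hpq h)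
    have h2 : (∀ k : Fin 3, ∃ l, p + l = k ∧ q + l = k + 1) ∨
        (∀ k : Fin 3, ∃ l, p + l = k + 1 ∧ q + l = k) := by
      clear h h1
      revert p q; decide
    rcases h2 with h2 | h2
    · left; intro k; obtain ⟨l, e1, e2⟩ := h2 k; have := h1 l; rwa [e1, e2] at this
    · right; intro k; obtain ⟨l, e1, e2⟩ := h2 k; have := h1 l; rwa [e1, e2] at this
  refine ⟨?_, ?_⟩
  · intro h
    have h1 : (Matrix.single 0 1 1 : Matrix (Fin 3) (Fin 3) ℂ) ∈
      LinearMap.ker (Matrix.traceLinearMap (Fin 3) ℂ ℂ) := by simp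
    rw [h, Submodule.mem_bot] at h1
    simpa using congrFun (congrFun h1 0) 1
  intro U hUtr hUG
  by_cases hU0 : U = ⊥
  · exact Or.inl hU0
  right
  -- the normalizer of `U`
  let N : Submodule ℂ (Matrix (Fin 3) (Fin 3) ℂ) :=
    { carrier := {X | X.trace = 0 ∧ ∀ Y ∈ U, X * Y - Y * X ∈ U}
      zero_mem' := by simp
      add_mem' := by
        rintro a b ⟨ha, ha'⟩ ⟨hb, hb'⟩
        refine ⟨by simp [ha, hb], fun Y hY => ?_⟩
        have := U.add_mem (ha' Y hY) (hb' Y hY)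
        convert this using 1; noncomm_ring
      smul_mem' := by
        rintro r a ⟨ha, ha'⟩
        refine ⟨by simp [ha], fun Y hY => ?_⟩
        have := U.smul_mem r (ha' Y hY)
        convert this using 1
        rw [smul_sub, Matrix.smul_mul, Matrix.mul_smul] }
  have hNtr : N ≤ LinearMap.ker (Matrix.traceLinearMap (Fin 3) ℂ ℂ) := by
    rintro X ⟨hX, -⟩; simpa using hX
  have hNG : ∀ g : G, ∀ M ∈ N,
      (σ g : Matrix (Fin 3) (Fin 3) ℂ) * M * ((σ g)⁻¹ : GL (Fin 3) ℂ) ∈ N := by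
    rintro g M ⟨hM, hM'⟩
    have e2 : (((σ g)⁻¹ : GL (Fin 3) ℂ) : Matrix (Fin 3) (Fin 3) ℂ) * (σ g : GL (Fin 3) ℂ) = 1 := by
      rw [← Units.val_mul]; simp
    have e1 : (σ g : Matrix (Fin 3) (Fin 3) ℂ) * ((σ g)⁻¹ : GL (Fin 3) ℂ) = 1 := by
      rw [← Units.val_mul]; simp
    refine ⟨?_, fun Y hY => ?_⟩
    · rw [Matrix.trace_mul_comm, ← mul_assoc, e2, one_mul, hM]
    · have h1 := hUG g⁻¹ Y hY
      rw [map_inv, inv_inv] at h1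
      have h2 := hUG g _ (hM' _ h1)
      convert h2 using 1
      generalize (σ g : Matrix (Fin 3) (Fin 3) ℂ) = S at *
      generalize (((σ g)⁻¹ : GL (Fin 3) ℂ) : Matrix (Fin 3) (Fin 3) ℂ) = S' at *
      have : S * (M * (S' * Y * S) - S' * Y * S * M) * S'
        = S * M * S' * Y * (S * S') - (S * S') * Y * (S * M * S') := by noncomm_ring
      rw [this, e1, mul_one, one_mul]
  have hDiagN : ∀ w : Fin 3 → ℂ, w 0 + w 1 + w 2 = 0 → Matrix.diagonal w ∈ N := by
    intro w hw
    refine ⟨by simpa [Matrix.trace, Fin.sum_univ_three] using hw, fun Y hY => ?_⟩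
    have e : Matrix.diagonal w * Y - Y * Matrix.diagonal w
        = ∑ p, ∑ q, ((w p - w q) * Y p q) • Matrix.single p q (1 : ℂ) := by
      conv_lhs => rw [Matrix.matrix_eq_sum_single (Matrix.diagonal w * Y - Y * Matrix.diagonal w)]
      refine Finset.sum_congr rfl fun p _ => Finset.sum_congr rfl fun q _ => ?_
      rw [Matrix.smul_single]
      congr 1
      simp [Matrix.diagonal_mul, Matrix.mul_diagonal]
      try ring
    rw [e]
    refine U.sum_mem fun p _ => U.sum_mem fun q _ => ?_
    by_cases hpq : p = q
    · simp [hpq]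
    by_cases h0 : Y p q = 0
    · simp [h0]
    exact U.smul_mem _ (comp_mem hζ U (fun M hM => hd M ▸ hUG d M hM) Y hY p q hpq h0)
  have hN0 : N ≠ ⊥ := by
    intro h
    have h1 := hDiagN ![1, -1, 0] (by simp)
    rw [h, Submodule.mem_bot] at h1
    simpa using congrFun (congrFun h1 0) 0
  have hU := key U hUtr hUG hU0
  have hN := key N hNtr hNG hN0
  have br : ∀ X ∈ N, ∀ Y ∈ U, X * Y - Y * X ∈ U := fun X hX => hX.2
  have hall : (∀ k : Fin 3, Matrix.single k (k + 1) (1 : ℂ) ∈ U) →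
      (∀ k : Fin 3, Matrix.single (k + 1) k (1 : ℂ) ∈ U) →
      (∀ k : Fin 3, Matrix.single k k (1 : ℂ) - Matrix.single (k + 1) (k + 1) 1 ∈ U) →
      U = LinearMap.ker (Matrix.traceLinearMap (Fin 3) ℂ ℂ) := by
    intro h1 h2 h3
    refine le_antisymm hUtr fun M hM => ?_
    have htr : M 0 0 + M 1 1 + M 2 2 = 0 := by
      simpa [Matrix.trace, Fin.sum_univ_three] using hM
    have e : M = M 0 1 • Matrix.single 0 (0 + 1) (1 : ℂ) + M 1 2 • Matrix.single 1 (1 + 1) (1 : ℂ)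
        + M 2 0 • Matrix.single 2 (2 + 1) (1 : ℂ) + M 1 0 • Matrix.single (0 + 1) 0 (1 : ℂ)
        + M 2 1 • Matrix.single (1 + 1) 1 (1 : ℂ) + M 0 2 • Matrix.single (2 + 1) 2 (1 : ℂ)
        + M 0 0 • (Matrix.single 0 0 (1 : ℂ) - Matrix.single (0 + 1) (0 + 1) 1)
        + (M 0 0 + M 1 1) • (Matrix.single 1 1 (1 : ℂ) - Matrix.single (1 + 1) (1 + 1) 1) := by
      ext p q
      fin_cases p <;> fin_cases q <;> simp [Matrix.single_apply]
      linear_combination htr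
    rw [e]
    refine U.add_mem (U.add_mem (U.add_mem (U.add_mem (U.add_mem (U.add_mem (U.add_mem ?_ ?_) ?_)
      ?_) ?_) ?_) ?_) ?_ <;> apply U.smul_mem
    exacts [h1 0, h1 1, h1 2, h2 0, h2 1, h2 2, h3 0, h3 1]
  -- bracket relations between matrix units
  have b1 : ∀ k : Fin 3, Matrix.single (k + 1 + 1) (k + 1 + 1 + 1) (1 : ℂ) *
      Matrix.single (k + 1) (k + 1 + 1) (1 : ℂ) - Matrix.single (k + 1) (k + 1 + 1) (1 : ℂ) *
      Matrix.single (k + 1 + 1) (k + 1 + 1 + 1) (1 : ℂ) = (-1 : ℂ) • Matrix.single (k + 1) k 1 := by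
    intro k
    fin_cases k <;> simp
  have b2 : ∀ k : Fin 3, Matrix.single (k + 1) k (1 : ℂ) *
      Matrix.single (k + 1 + 1) (k + 1) (1 : ℂ) - Matrix.single (k + 1 + 1) (k + 1) (1 : ℂ) *
      Matrix.single (k + 1) k (1 : ℂ) =
      (-1 : ℂ) • Matrix.single (k + 1 + 1) (k + 1 + 1 + 1) 1 := by
    intro k
    fin_cases k <;> simp
  have b3 : ∀ k : Fin 3, Matrix.single k (k + 1) (1 : ℂ) * Matrix.single (k + 1) k (1 : ℂ) -
      Matrix.single (k + 1) k (1 : ℂ) * Matrix.single k (k + 1) (1 : ℂ) =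
      Matrix.single k k (1 : ℂ) - Matrix.single (k + 1) (k + 1) 1 := by
    intro k; simp
  have hk1 : ∀ k : Fin 3, k + 1 ≠ k := by decide
  have b4 : ∀ k : Fin 3, Matrix.single (k + 1) k (1 : ℂ) *
      (Matrix.single k k (1 : ℂ) - Matrix.single (k + 1) (k + 1) 1) -
      (Matrix.single k k (1 : ℂ) - Matrix.single (k + 1) (k + 1) 1) * Matrix.single (k + 1) k (1 : ℂ)
      = (2 : ℂ) • Matrix.single (k + 1) k (1 : ℂ) := by
    intro k
    rw [mul_sub, sub_mul, Matrix.single_mul_single_same, Matrix.single_mul_single_same,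
      Matrix.single_mul_single_of_ne _ _ _ _ (hk1 k).symm,
      Matrix.single_mul_single_of_ne _ _ _ _ (hk1 k).symm, two_smul]
    simp
  have b5 : ∀ k : Fin 3, Matrix.single k (k + 1) (1 : ℂ) *
      (Matrix.single k k (1 : ℂ) - Matrix.single (k + 1) (k + 1) 1) -
      (Matrix.single k k (1 : ℂ) - Matrix.single (k + 1) (k + 1) 1) * Matrix.single k (k + 1) (1 : ℂ)
      = (-2 : ℂ) • Matrix.single k (k + 1) (1 : ℂ) := by
    intro k
    rw [mul_sub, sub_mul, Matrix.single_mul_single_same, Matrix.single_mul_single_same,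
      Matrix.single_mul_single_of_ne _ _ _ _ (hk1 k),
      Matrix.single_mul_single_of_ne _ _ _ _ (hk1 k), neg_smul, two_smul]
    simp [sub_eq_add_neg]
  have neg : ∀ X, (-1 : ℂ) • X ∈ U → X ∈ U := by
    intro X h; simpa using U.smul_mem (-1 : ℂ) h
  have hup : ∀ k : Fin 3, k + 1 + 1 + 1 = k := by decide
  have diagU : (∀ k : Fin 3, Matrix.single k k (1 : ℂ) - Matrix.single (k + 1) (k + 1) 1 ∈ U) →
      ∀ X ∈ N, ∀ k : Fin 3, X * (Matrix.single k k (1 : ℂ) - Matrix.single (k + 1) (k + 1) 1) -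
       (Matrix.single k k (1 : ℂ) - Matrix.single (k + 1) (k + 1) 1) * X ∈ U :=
    fun h X hX k => br X hX _ (h k)
  rcases hU with hU | hU <;> rcases hN with hN | hN
  · have h2 : ∀ k : Fin 3, Matrix.single (k + 1) k (1 : ℂ) ∈ U := fun k =>
      neg _ (b1 k ▸ br _ (hN _) _ (hU _))
    exact hall hU h2 fun k => b3 k ▸ br _ (hN _) _ (h2 _)
  · have h3 : ∀ k : Fin 3, Matrix.single k k (1 : ℂ) - Matrix.single (k + 1) (k + 1) 1 ∈ U := by
      intro k
      have := br _ (hN k) _ (hU k)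
      rw [← b3 k]; apply neg; convert this using 1; simp
    refine hall hU (fun k => ?_) h3
    have := U.smul_mem (1 / 2 : ℂ) (diagU h3 _ (hN k) k)
    convert this using 1
    rw [b4 k, smul_smul]; norm_num
  · have h3 : ∀ k : Fin 3, Matrix.single k k (1 : ℂ) - Matrix.single (k + 1) (k + 1) 1 ∈ U := by
      intro k
      have := br _ (hN k) _ (hU k)
      rw [← b3 k]; exact this
    refine hall (fun k => ?_) hU h3
    have := U.smul_mem (-1 / 2 : ℂ) (diagU h3 _ (hN k) k)
    convert this using 1
    rw [b5 k, smul_smul]; norm_num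
  · have h2 : ∀ k : Fin 3, Matrix.single k (k + 1) (1 : ℂ) ∈ U := by
      have h : ∀ k : Fin 3, Matrix.single (k + 1 + 1) (k + 1 + 1 + 1) (1 : ℂ) ∈ U := fun k =>
        neg _ (b2 k ▸ br _ (hN _) _ (hU _))
      intro k
      have := h (k + 1)
      simpa only [hup] using this
    refine hall h2 hU fun k => ?_
    rw [← b3 k]; apply neg
    convert br _ (hN k) _ (h2 k) using 1
    simp

lemma exists_eigen (B : Matrix (Fin 3) (Fin 3) ℂ) (h7 : B ^ 7 = 1) (h1 : B ≠ 1) :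
    ∃ (ζ : ℂ) (v : Fin 3 → ℂ), v ≠ 0 ∧ B *ᵥ v = ζ • v ∧ IsPrimitiveRoot ζ 7 := by
  let Q : Polynomial ℂ := ∑ k ∈ Finset.range 7, Polynomial.X ^ k
  have hQ : Polynomial.aeval B Q * (B - 1) = 0 := by
    have := geom_sum_mul B 7
    simp only [Q, map_sum, map_pow, Polynomial.aeval_X]
    rw [this, h7, sub_self]
  have h0 : (0 : ℂ) ∈ spectrum ℂ (Polynomial.aeval B Q) := by
    rw [spectrum.zero_mem_iff]
    intro hu
    exact h1 (sub_eq_zero.1 ((hu.mul_right_eq_zero).1 hQ))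
  rw [spectrum.map_polynomial_aeval_of_nonempty B Q
    (spectrum.nonempty_of_isAlgClosed_of_finiteDimensional ℂ B)] at h0
  obtain ⟨ζ, hζ, hζ0⟩ := h0
  have hζ0 : ∑ k ∈ Finset.range 7, ζ ^ k = 0 := by
    simpa [Q, Polynomial.eval_finsetSum] using hζ0
  have h71 : ζ ^ 7 = 1 := by
    have := geom_sum_mul ζ 7
    rw [hζ0, zero_mul] at this
    exact (sub_eq_zero.1 this.symm)
  have hne : ζ ≠ 1 := by
    rintro rfl
    norm_num at hζ0
  rw [← Matrix.spectrum_toLin', ← Module.End.hasEigenvalue_iff_mem_spectrum] at hζ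
  obtain ⟨v, hv⟩ := hζ.exists_hasEigenvector
  refine ⟨ζ, v, hv.2, by simpa using hv.apply_eq_smul, ?_⟩
  have : Fact (Nat.Prime 7) := ⟨by norm_num⟩
  have := orderOf_eq_prime h71 hne
  rw [← this]
  exact IsPrimitiveRoot.orderOf ζ

lemma transfer {G : Type*} [Group G] (ρ σ : G →* GL (Fin 3) ℂ) (P : GL (Fin 3) ℂ)
    (h : ∀ g, ρ g = P * σ g * P⁻¹) (hσ : MatAdIrreducible σ) : MatAdIrreducible ρ := by
  have e1 : (P : Matrix (Fin 3) (Fin 3) ℂ) * ((P⁻¹ : GL (Fin 3) ℂ) : Matrix (Fin 3) (Fin 3) ℂ) = 1 := by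
    rw [← Units.val_mul]; simp
  have e2 : ((P⁻¹ : GL (Fin 3) ℂ) : Matrix (Fin 3) (Fin 3) ℂ) * (P : Matrix (Fin 3) (Fin 3) ℂ) = 1 := by
    rw [← Units.val_mul]; simp
  refine ⟨hσ.1, fun U hUtr hUG => ?_⟩
  have hg1 : ∀ g, (ρ g : Matrix (Fin 3) (Fin 3) ℂ) = P * σ g * (P⁻¹ : GL (Fin 3) ℂ) := by
    intro g; rw [h g]; simp only [Units.val_mul]
  have hg2 : ∀ g, (((ρ g)⁻¹ : GL (Fin 3) ℂ) : Matrix (Fin 3) (Fin 3) ℂ)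
      = P * ((σ g)⁻¹ : GL (Fin 3) ℂ) * (P⁻¹ : GL (Fin 3) ℂ) := by
    intro g; rw [h g]; simp only [_root_.mul_inv_rev, inv_inv, Units.val_mul, mul_assoc]
  generalize (P : Matrix (Fin 3) (Fin 3) ℂ) = S at *
  generalize ((P⁻¹ : GL (Fin 3) ℂ) : Matrix (Fin 3) (Fin 3) ℂ) = S' at *
  let φ : Matrix (Fin 3) (Fin 3) ℂ →ₗ[ℂ] Matrix (Fin 3) (Fin 3) ℂ :=
    (LinearMap.mulRight ℂ S').comp (LinearMap.mulLeft ℂ S)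
  have hφ : ∀ M, φ M = S * M * S' := fun M => rfl
  have hφ2 : ∀ M, φ (S' * M * S) = M := by
    intro M
    rw [hφ, show S * (S' * M * S) * S' = (S * S') * M * (S * S') by noncomm_ring, e1]; simp
  have htr : ∀ M, (φ M).trace = M.trace := by
    intro M; rw [hφ, Matrix.trace_mul_comm, ← mul_assoc, e2, one_mul]
  have htr' : ∀ M, (S' * M * S).trace = M.trace := by
    intro M; rw [Matrix.trace_mul_comm, ← mul_assoc, e1, one_mul]
  have k1 : U.comap φ ≤ LinearMap.ker (Matrix.traceLinearMap (Fin 3) ℂ ℂ) := by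
    intro M hM
    have := hUtr (Submodule.mem_comap.1 hM)
    simpa [htr] using this
  have k2 : ∀ g : G, ∀ M ∈ U.comap φ,
      (σ g : Matrix (Fin 3) (Fin 3) ℂ) * M * ((σ g)⁻¹ : GL (Fin 3) ℂ) ∈ U.comap φ := by
    intro g M hM
    rw [Submodule.mem_comap, hφ] at *
    have := hUG g _ hM
    rw [hg1, hg2] at this
    convert this using 1
    calc _ = S * (σ g : Matrix (Fin 3) (Fin 3) ℂ) * 1 * M * 1 * ((σ g)⁻¹ : GL (Fin 3) ℂ) * S' := by
          noncomm_ring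
      _ = _ := by rw [← e2]; noncomm_ring
  rcases hσ.2 (U.comap φ) k1 k2 with hb | hb
  · left
    rw [Submodule.eq_bot_iff]
    intro M hM
    have h1 : S' * M * S ∈ U.comap φ := by
      rw [Submodule.mem_comap, hφ2]; exact hM
    rw [hb, Submodule.mem_bot] at h1
    rw [← hφ2 M, h1, map_zero]
  · right
    refine le_antisymm hUtr fun M hM => ?_
    have h1 : S' * M * S ∈ U.comap φ := by
      rw [hb]
      simpa [htr'] using hM
    rw [Submodule.mem_comap, hφ2] at h1; exact h1

lemma psl_facts : ∃ u t s : Matrix.ProjectiveSpecialLinearGroup (Fin 2) (ZMod 7),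
    t * u * t⁻¹ = u ^ 2 ∧ t ^ 3 = 1 ∧ ¬ Commute (s * u * s⁻¹) u := by
  let u : Matrix.SpecialLinearGroup (Fin 2) (ZMod 7) := ⟨!![1, 1; 0, 1], by decide⟩
  let t : Matrix.SpecialLinearGroup (Fin 2) (ZMod 7) := ⟨!![4, 0; 0, 2], by decide⟩
  let s : Matrix.SpecialLinearGroup (Fin 2) (ZMod 7) := ⟨!![0, 1; -1, 0], by decide⟩
  have h1 : t * u = u ^ 2 * t := by
    apply Subtype.ext; decide
  have h2 : t ^ 3 = 1 := by
    apply Subtype.ext; decide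
  let π := QuotientGroup.mk' (Subgroup.center (Matrix.SpecialLinearGroup (Fin 2) (ZMod 7)))
  refine ⟨π u, π t, π s, ?_, ?_, ?_⟩
  · rw [mul_inv_eq_iff_eq_mul, ← map_mul, ← map_pow, ← map_mul, h1]
  · rw [← map_pow, h2, map_one]
  · intro h
    have h3 : π (s * u * s⁻¹ * u) = π (u * (s * u * s⁻¹)) := by
      simpa using h.eq
    rw [QuotientGroup.mk'_eq_mk'] at h3
    obtain ⟨z, hz, hz'⟩ := h3
    have hzu := Subgroup.mem_center_iff.1 hz u
    have h5 : (s * u * s⁻¹ * u)⁻¹ * (u * (s * u * s⁻¹)) = z := by rw [← hz']; group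
    rw [← h5] at hzu
    have h6 := congrArg (fun x : Matrix.SpecialLinearGroup (Fin 2) (ZMod 7) => x.1) hzu
    revert h6
    decide

lemma final {G : Type*} [Group G] (ρ : G →* GL (Fin 3) ℂ) (d t s : G) (z z' : GL (Fin 3) ℂ)
    (hz : z ∈ Subgroup.center (GL (Fin 3) ℂ)) (hz' : z' ∈ Subgroup.center (GL (Fin 3) ℂ))
    (h1 : ρ t * ρ d = z * ((ρ d) ^ 2 * ρ t)) (h2 : ρ t ^ 3 = z')
    (h3 : ¬ Commute (ρ (s * d * s⁻¹)) (ρ d)) : MatAdIrreducible ρ := by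
  -- normalise the element of order 7
  let b : GL (Fin 3) ℂ := z * ρ d
  have hzc : ∀ x, x * z = z * x := Subgroup.mem_center_iff.1 hz
  have hb1 : ρ t * b = b ^ 2 * ρ t := by
    calc ρ t * (z * ρ d) = z * (ρ t * ρ d) := by rw [← mul_assoc, hzc, mul_assoc]
      _ = z * (z * ((ρ d) ^ 2 * ρ t)) := by rw [h1]
      _ = _ := by
        simp only [b]
        rw [(show Commute z (ρ d) from (hzc _).symm).mul_pow, pow_two z]
        simp only [mul_assoc]
  have hb1' : ρ t * b * (ρ t)⁻¹ = b ^ 2 := by rw [hb1]; group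
  have hbp : ∀ n : ℕ, ρ t * b ^ n * (ρ t)⁻¹ = b ^ (2 * n) := by
    intro n
    rw [← conj_pow, hb1', ← pow_mul]
  have hb8 : b ^ 8 = b := by
    have e : b ^ 8 = ρ t ^ 3 * b * (ρ t ^ 3)⁻¹ := by
      have e1 := hbp 4
      rw [show 2 * 4 = 8 from rfl, ← show 2 * 2 = 4 from rfl, ← hbp 2, ← hb1'] at e1
      rw [← e1, pow_succ, pow_two]; group
    rw [e, h2, ← Subgroup.mem_center_iff.1 hz' b]; group
  have hb7 : b ^ 7 = 1 := by
    have : b ^ 7 * b = 1 * b := by rw [← pow_succ, hb8, one_mul]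
    exact mul_right_cancel this
  have hb4 : b * ρ t = ρ t * b ^ 4 := by
    have := hbp 4
    rw [show 2 * 4 = 8 from rfl, hb8] at this
    exact (mul_inv_eq_iff_eq_mul.1 this).symm
  have hbne : b ≠ 1 := by
    intro h
    apply h3
    have e : ρ d = z⁻¹ := by rw [eq_inv_iff_mul_eq_one, hzc]; exact h
    rw [e]
    exact (Subgroup.mem_center_iff.1 (Subgroup.inv_mem _ hz) _)
  obtain ⟨ζ, v, hv0, hv, hζ⟩ := exists_eigen (b : Matrix (Fin 3) (Fin 3) ℂ)
    (by rw [← Units.val_pow_eq_pow_val, hb7]; rfl) (fun h => hbne (Units.ext h))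
  have h71 := hζ.pow_eq_one
  rw [Matrix.GeneralLinearGroup.mem_center_iff_val_mem_range_scalar] at hz hz'
  obtain ⟨c, hc⟩ := hz
  obtain ⟨l, hl⟩ := hz'
  have hc0 : c ≠ 0 := by
    rintro rfl
    have : IsUnit (z : Matrix (Fin 3) (Fin 3) ℂ) := z.isUnit
    rw [← hc] at this; simp at this
  have hl0 : l ≠ 0 := by
    rintro rfl
    have : IsUnit (z' : Matrix (Fin 3) (Fin 3) ℂ) := z'.isUnit
    rw [← hl] at this; simp at this
  have hT3 : (ρ t : Matrix (Fin 3) (Fin 3) ℂ) *ᵥ ((ρ t : Matrix (Fin 3) (Fin 3) ℂ) *ᵥ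
      ((ρ t : Matrix (Fin 3) (Fin 3) ℂ) *ᵥ v)) = l • v := by
    rw [Matrix.mulVec_mulVec, Matrix.mulVec_mulVec, ← Units.val_mul, ← Units.val_mul,
      show ρ t * ρ t * ρ t = ρ t ^ 3 by rw [pow_succ, pow_two], h2, ← hl]
    simp
  have hbA : (b : Matrix (Fin 3) (Fin 3) ℂ) = c • (ρ d : Matrix (Fin 3) (Fin 3) ℂ) := by
    simp only [b, Units.val_mul, ← hc]
    ext p q; simp [Matrix.diagonal_mul]
  have hb4' : (b : Matrix (Fin 3) (Fin 3) ℂ) * (ρ t : Matrix (Fin 3) (Fin 3) ℂ)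
    = (ρ t : Matrix (Fin 3) (Fin 3) ℂ) * (b : Matrix (Fin 3) (Fin 3) ℂ) ^ 4 := by
    rw [← Units.val_mul, hb4]; simp
  have hTinj : ∀ w : Fin 3 → ℂ, w ≠ 0 → (ρ t : Matrix (Fin 3) (Fin 3) ℂ) *ᵥ w ≠ 0 := by
    intro w hw h
    apply hw
    have : ((ρ t)⁻¹ : GL (Fin 3) ℂ).val *ᵥ ((ρ t : Matrix (Fin 3) (Fin 3) ℂ) *ᵥ w) = w := by
      rw [Matrix.mulVec_mulVec, ← Units.val_mul]; simp
    rw [← this, h, Matrix.mulVec_zero]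
  generalize hT : (ρ t : Matrix (Fin 3) (Fin 3) ℂ) = T at *
  generalize hB : (b : Matrix (Fin 3) (Fin 3) ℂ) = B at *
  have hstep : ∀ (μ : ℂ) (w : Fin 3 → ℂ), B *ᵥ w = μ • w → B *ᵥ (T *ᵥ w) = μ ^ 4 • (T *ᵥ w) := by
    intro μ w hw
    have hw4 : B ^ 4 *ᵥ w = μ ^ 4 • w := by
      have e : B ^ 4 = B * (B * (B * B)) := by noncomm_ring
      rw [e]
      simp only [← Matrix.mulVec_mulVec, hw, Matrix.mulVec_smul, smul_smul]
      ring_nf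
    rw [Matrix.mulVec_mulVec, hb4', ← Matrix.mulVec_mulVec, hw4, Matrix.mulVec_smul]
  let cols : Fin 3 → Fin 3 → ℂ := ![v, T *ᵥ v, T *ᵥ (T *ᵥ v)]
  have hv1 := hstep ζ v hv
  have hv2 : B *ᵥ (T *ᵥ (T *ᵥ v)) = ζ ^ 2 • (T *ᵥ (T *ᵥ v)) := by
    rw [hstep _ _ hv1]
    congr 1
    linear_combination (ζ ^ 9 + ζ ^ 2) * h71
  have heig : ∀ j, B *ᵥ cols j = ζ ^ expo j • cols j := by
    intro j
    fin_cases j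
    · simpa [cols, expo] using hv
    · simpa [cols, expo] using hv1
    · simpa [cols, expo] using hv2
  have hcol0 : ∀ j, cols j ≠ 0 := by
    intro j
    fin_cases j
    · exact hv0
    · exact hTinj _ hv0
    · exact hTinj _ (hTinj _ hv0)
  have hinj : Function.Injective fun j : Fin 3 => ζ ^ expo j := by
    intro i j hij
    have h7 : ∀ i, expo i < 7 := by decide
    have h8 : ∀ i j, expo i = expo j → i = j := by decide
    exact h8 i j (hζ.pow_inj (h7 i) (h7 j) hij)
  have hli : LinearIndependent ℂ cols := by
    refine Module.End.eigenvectors_linearIndependent' (Matrix.toLin' B) (fun j => ζ ^ expo j) hinj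
      cols fun j => ?_
    rw [Module.End.hasEigenvector_iff, Module.End.mem_eigenspace_iff]
    exact ⟨by simpa using heig j, hcol0 j⟩
  have hPu : IsUnit (Matrix.of cols)ᵀ := by
    rw [← Matrix.linearIndependent_cols_iff_isUnit]
    exact hli
  obtain ⟨P, hP⟩ := hPu
  have hmul : ∀ (X : Matrix (Fin 3) (Fin 3) ℂ) i j, (X * (P : Matrix (Fin 3) (Fin 3) ℂ)) i j
      = (X *ᵥ cols j) i := by
    intro X i j
    rw [hP]; simp [Matrix.mul_apply, Matrix.mulVec, dotProduct]
  let C : Matrix (Fin 3) (Fin 3) ℂ := !![0, 0, l; 1, 0, 0; 0, 1, 0]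
  have hTP : T * (P : Matrix (Fin 3) (Fin 3) ℂ) = P * C := by
    ext i j
    rw [hmul, hP]
    fin_cases j
    · simp [Matrix.mul_apply, Fin.sum_univ_three, C, cols]
    · simp [Matrix.mul_apply, Fin.sum_univ_three, C, cols]
    · simp [Matrix.mul_apply, Fin.sum_univ_three, C, cols, -Matrix.mulVec_mulVec, hT3, mul_comm]
  have hBP : B * (P : Matrix (Fin 3) (Fin 3) ℂ) = P * Matrix.diagonal fun j => ζ ^ expo j := by
    ext i j
    rw [hmul, heig, Matrix.mul_diagonal, hP]
    simp [mul_comm]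
  let σ : G →* GL (Fin 3) ℂ := (MulAut.conj P⁻¹).toMonoidHom.comp ρ
  have hσ : ∀ g, σ g = P⁻¹ * ρ g * P := by intro g; simp [σ]
  have hPP : ((P⁻¹ : GL (Fin 3) ℂ) : Matrix (Fin 3) (Fin 3) ℂ) * (P : Matrix (Fin 3) (Fin 3) ℂ) = 1 := by
    rw [← Units.val_mul]; simp
  have hσt : (σ t : Matrix (Fin 3) (Fin 3) ℂ) = C := by
    rw [hσ, Units.val_mul, Units.val_mul, hT, mul_assoc, hTP, ← mul_assoc, hPP, one_mul]
  have hσd : (σ d : Matrix (Fin 3) (Fin 3) ℂ) = c⁻¹ • Matrix.diagonal fun j => ζ ^ expo j := by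
    have : (ρ d : Matrix (Fin 3) (Fin 3) ℂ) = c⁻¹ • B := by
      rw [hbA, smul_smul, inv_mul_cancel₀ hc0, one_smul]
    rw [hσ, Units.val_mul, Units.val_mul, this, mul_assoc, Matrix.smul_mul, hBP, Matrix.mul_smul,
      ← mul_assoc, hPP, one_mul]
  have hconj : ∀ (g : G) (M N : Matrix (Fin 3) (Fin 3) ℂ),
      (σ g : Matrix (Fin 3) (Fin 3) ℂ) * M = N * σ g →
      (σ g : Matrix (Fin 3) (Fin 3) ℂ) * M * ((σ g)⁻¹ : GL (Fin 3) ℂ) = N := by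
    intro g M N h
    rw [h, mul_assoc, ← Units.val_mul]; simp
  refine transfer ρ σ P (fun g => by rw [hσ]; group) ?_
  refine core σ d t s ![1, 1, l] ?_ hζ ?_ ?_ ?_ ?_
  · intro i; fin_cases i <;> simp [hl0]
  · intro p q hpq
    rw [hσd]; simp [hpq]
  · intro M
    apply hconj
    rw [hσd]
    ext p q
    rw [Matrix.smul_mul, Matrix.mul_smul, Matrix.smul_apply, Matrix.smul_apply,
      Matrix.diagonal_mul, Matrix.mul_diagonal]
    congr 1
    simp only [scaleMat, Matrix.of_apply]
    have : ζ ^ ((expo p + 6 * expo q) * 1) * ζ ^ expo q = ζ ^ expo p := by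
      rw [← pow_add, show (expo p + 6 * expo q) * 1 + expo q = expo p + 7 * expo q by ring,
        pow_add, pow_mul, h71, one_pow, mul_one]
    rw [← this]; ring
  · intro M
    apply hconj
    rw [hσt]
    ext p q
    have e1 : (0 : Fin 3) - 1 = 2 := rfl
    have e2 : (2 : Fin 3) - 1 = 1 := rfl
    fin_cases p <;> fin_cases q <;>
      simp [Matrix.mul_apply, Fin.sum_univ_three, C, shiftMat, e1, e2] <;> field_simp
  · intro h
    apply h3
    rw [hσ, hσ] at h
    have h4 : P⁻¹ * (ρ (s * d * s⁻¹) * ρ d) * P = P⁻¹ * (ρ d * ρ (s * d * s⁻¹)) * P := by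
      have := h.eq
      calc _ = P⁻¹ * ρ (s * d * s⁻¹) * P * (P⁻¹ * ρ d * P) := by group
        _ = _ := by rw [this]; group
    exact mul_left_cancel (mul_right_cancel h4)

/-- Let `ρ : G → GL₃(ℂ)` be an irreducible 3-dimensional representation of
a finite group whose projective image in `PGL₃(ℂ)` is isomorphic to `PSL₂(𝔽₇)`. Then
`Ad ρ`, the 8-dimensional conjugation representation on trace-zero `3 × 3` matrices,
is irreducible. -/
theorem matAdIrreducible_of_projImage_PSL27
    {G : Type*} [Group G] [Finite G] (ρ : G →* GL (Fin 3) ℂ)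
    (hirr : MatIrreducible ρ)
    (hPSL : Nonempty (projImage ρ ≃* Matrix.ProjectiveSpecialLinearGroup (Fin 2) (ZMod 7))) :
    MatAdIrreducible ρ := by
  obtain ⟨e⟩ := hPSL
  obtain ⟨u, t, s, h1, h2, h3⟩ := psl_facts
  let π : G →* projImage ρ := ((QuotientGroup.mk' (Subgroup.center (GL (Fin 3) ℂ))).comp ρ).rangeRestrict
  have hπ : Function.Surjective π := MonoidHom.rangeRestrict_surjective _
  obtain ⟨gu, hu⟩ := hπ (e.symm u)
  obtain ⟨gt, ht⟩ := hπ (e.symm t)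
  obtain ⟨gs, hs⟩ := hπ (e.symm s)
  have hker : ∀ g, π g = 1 → ρ g ∈ Subgroup.center (GL (Fin 3) ℂ) := by
    intro g hg
    have := congrArg Subtype.val hg
    exact (QuotientGroup.eq_one_iff _).1 this
  have hz : ρ (gt * gu * gt⁻¹ * (gu ^ 2)⁻¹) ∈ Subgroup.center (GL (Fin 3) ℂ) := by
    apply hker
    simp only [map_mul, map_inv, map_pow, hu, ht]
    rw [← map_inv, ← map_mul, ← map_mul, h1, map_pow]; group
  have hz' : ρ (gt ^ 3) ∈ Subgroup.center (GL (Fin 3) ℂ) := by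
    apply hker
    rw [map_pow, ht, ← map_pow, h2, map_one]
  refine final ρ gu gt gs _ _ hz hz' ?_ (map_pow _ _ _).symm ?_
  · simp only [← map_mul, ← map_pow]; congr 1; group
  · intro h
    apply h3
    have h4 : π (gs * gu * gs⁻¹) * π gu = π gu * π (gs * gu * gs⁻¹) := by
      apply Subtype.ext
      exact congrArg (QuotientGroup.mk' (Subgroup.center (GL (Fin 3) ℂ))) h.eq
    simp only [map_mul, map_inv, hu, hs] at h4
    have h5 := congrArg e h4
    rw [commute_iff_eq]
    simpa using h5
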